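/- Let M be a skew-symmetric or symmetric V×V matrix over a field F representing (via a matrix representation (M,a,b)) a Lagrangian chain-group N on V to K = F². Then for every X ⊆ V, rank(M[X, V∖X]) = |X| − dim(N×X). -/

import Mathlib

open Matrix

variable {V : Type*} [Fintype V] [DecidableEq V] {F : Type*} [Field F]

/-- The symmetric bilinear form `b⁺((a,b),(c,d)) = ad + bc` on `K = F²`. -/
def bplus : F × F → F × F → F := fun x y => x.1 * y.2 + x.2 * y.1

/-- The skew-symmetric bilinear form `b⁻((a,b),(c,d)) = ad − bc` on `K = F²`. -/
def bminus : F × F → F × F → F := fun x y => x.1 * y.2 - x.2 * y.1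

/-- The submatrix of `M` with rows indexed by `X` and columns indexed by `Y`. -/
def psub (M : Matrix V V F) (X Y : Finset V) : Matrix {a // a ∈ X} {a // a ∈ Y} F :=
  fun i j => M i j

/-- Restriction of chains to a subset `X` of the ground set. -/
def res (F K : Type*) [Semiring F] [AddCommMonoid K] [Module F K]
    {V : Type*} (X : Finset V) : (V → K) →ₗ[F] ({x // x ∈ X} → K) :=
  LinearMap.funLeft F K Subtype.val

/-- Chains vanishing outside `X`. -/
def vanish (F : Type*) [Semiring F] {K : Type*} [AddCommMonoid K] [Module F K]
    {V : Type*} (X : Finset V) : Submodule F (V → K) where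
  carrier := {f | ∀ v ∉ X, f v = 0}
  add_mem' := by
    intro a b ha hb v hv
    simp only [Pi.add_apply, ha v hv, hb v hv, add_zero]
  zero_mem' := by intro v hv; rfl
  smul_mem' := by
    intro c a ha v hv
    simp only [Pi.smul_apply, ha v hv, smul_zero]

/-- `N×X`, the restriction to `X` of the chains in `N` vanishing outside `X`. -/
def timesTo {K : Type*} [AddCommGroup K] [Module F K]
    (N : Submodule F (V → K)) (X : Finset V) : Submodule F ({x // x ∈ X} → K) :=
  (N ⊓ vanish F X).map (res F K X)

/-!
A coefficient vector `c` gives the chain `v ↦ (c ᵥ* M) v • a v + c v • b v`. As `a v` and `b v` are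
linearly independent, this chain vanishes outside `X` exactly when both `c` and `c ᵥ* M` do, that
is, when `c` is the extension by zero of a vector in the left kernel of `M[X, V∖X]`. Hence `N×X` is
isomorphic to that left kernel, and rank-nullity finishes the proof.
-/

lemma linearIndependent_pair_of_isotropic {R K : Type*} [CommRing R] [NoZeroDivisors R]
    [AddCommGroup K] [Module R K] (B : LinearMap.BilinForm R K) {p q : K} (hp : B p p = 0)
    (hpq : B p q ≠ 0) : LinearIndependent R ![p, q] := by
  refine LinearIndependent.pair_iff.2 fun s t h => ?_
  have ht : t = 0 := by simpa [hp, hpq] using congrArg (B p) h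
  have hs : s = 0 := by simpa [ht, hpq] using congrArg (B · q) h
  exact ⟨hs, ht⟩

lemma exists_bilinForm_eq_of_bplus_or_bminus {β : F × F → F × F → F}
    (hβ : β = bplus ∨ β = bminus) :
    ∃ B : LinearMap.BilinForm F (F × F), ∀ x y, B x y = β x y := by
  let P := LinearMap.BilinForm.linMulLin (LinearMap.fst F F F) (LinearMap.snd F F F)
  let Q := LinearMap.BilinForm.linMulLin (LinearMap.snd F F F) (LinearMap.fst F F F)
  rcases hβ with rfl | rfl
  · exact ⟨P + Q, fun _ _ => rfl⟩
  · exact ⟨P - Q, fun _ _ => rfl⟩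

lemma linearIndependent_pair_of_bplus_or_bminus {β : F × F → F × F → F}
    (hβ : β = bplus ∨ β = bminus) {p q : F × F} (hp : β p p = 0) (hpq : β p q ≠ 0) :
    LinearIndependent F ![p, q] := by
  obtain ⟨B, hB⟩ := exists_bilinForm_eq_of_bplus_or_bminus hβ
  exact linearIndependent_pair_of_isotropic B (by rwa [hB]) (by rwa [hB])

section LeftKernel

variable {m n : Type*} [Fintype m]

lemma rank_add_finrank_ker_vecMulLinear [Fintype n] (A : Matrix m n F) :
    A.rank + Module.finrank F (LinearMap.ker A.vecMulLinear) = Fintype.card m := by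
  classical
  rw [← rank_transpose, rank, mulVecLin_transpose, LinearMap.finrank_range_add_finrank_ker,
    Module.finrank_fintype_fun_eq_card]

lemma extend_vecMul {l R : Type*} [Fintype l] [NonUnitalNonAssocSemiring R] {e : l → m}
    (he : Function.Injective e) (c : l → R) (A : Matrix m n R) :
    Function.extend e c 0 ᵥ* A = c ᵥ* A.submatrix e id := by
  ext j
  refine (Fintype.sum_of_injective e he (fun i => c i * A (e i) j) _ (fun i hi => ?_)
    fun i => ?_).symm
  · rw [Function.extend_apply' _ _ _ hi, Pi.zero_apply, zero_mul]
  · rw [he.extend_apply]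

end LeftKernel

section Chains

variable {E R K : Type*} [Semiring R] [AddCommMonoid K] [Module R K]

/-- The extension by zero of a family of scalars on `X` to the whole ground set. -/
noncomputable def extendByZero (R : Type*) [Semiring R] (X : Finset E) : (X → R) →ₗ[R] (E → R) :=
  Function.ExtendByZero.linearMap R Subtype.val

lemma extendByZero_apply_coe {X : Finset E} (c : X → R) (i : X) : extendByZero R X c i = c i :=
  Subtype.val_injective.extend_apply c 0 i

lemma extendByZero_apply_of_notMem {X : Finset E} (c : X → R) {v : E} (hv : v ∉ X) :
    extendByZero R X c v = 0 :=
  Function.extend_apply' c (0 : E → R) v fun ⟨i, hi⟩ => hv (hi ▸ i.2)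

lemma range_extendByZero (X : Finset E) : LinearMap.range (extendByZero R X) = vanish R X := by
  ext c
  constructor
  · rintro ⟨d, rfl⟩ v hv
    exact extendByZero_apply_of_notMem d hv
  · refine fun hc => ⟨fun i => c i, funext fun v => ?_⟩
    by_cases hv : v ∈ X
    · exact extendByZero_apply_coe _ ⟨v, hv⟩
    · rw [extendByZero_apply_of_notMem _ hv, hc v hv]

/-- The chain-group represented by `(M, a, b)`: the span of the chains `f_i` with
`f_i(j) = m_ij a(j)` for `j ≠ i` and `f_i(i) = m_ii a(i) + b(i)`. -/
def chainGroup [DecidableEq E] (M : Matrix E E R) (a b : E → K) : Submodule R (E → K) :=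
  Submodule.span R (Set.range fun i : E => fun j : E =>
    if j = i then M i i • a i + b i else M i j • a j)

variable [Fintype E]

/-- The linear combination `∑ i, c i • f_i` of the chains spanning `chainGroup M a b`, as a linear
function of `c`. It is given by its values, so that it makes sense without decidable equality. -/
def chainOfCoeffs (M : Matrix E E R) (a b : E → K) : (E → R) →ₗ[R] (E → K) :=
  LinearMap.pi fun j =>
    (LinearMap.proj j ∘ₗ M.vecMulLinear).smulRight (a j) + (LinearMap.proj j).smulRight (b j)

lemma chainOfCoeffs_apply (M : Matrix E E R) (a b : E → K) (c : E → R) (j : E) :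
    chainOfCoeffs M a b c j = (c ᵥ* M) j • a j + c j • b j :=
  rfl

lemma range_chainOfCoeffs [DecidableEq E] (M : Matrix E E R) (a b : E → K) :
    LinearMap.range (chainOfCoeffs M a b) = chainGroup M a b := by
  rw [LinearMap.range_eq_map, ← (Pi.basisFun R E).span_eq, Submodule.map_span, ← Set.range_comp,
    chainGroup]
  congr 2 with i j
  rcases eq_or_ne j i with rfl | hji
  · simp [chainOfCoeffs_apply]
  · simp [chainOfCoeffs_apply, hji]

lemma comap_chainOfCoeffs_vanish (M : Matrix E E R) {a b : E → K}
    (hab : ∀ v, LinearIndependent R ![a v, b v]) (X : Finset E) :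
    (vanish R X).comap (chainOfCoeffs M a b) =
      vanish R X ⊓ (vanish R X).comap M.vecMulLinear := by
  ext c
  constructor
  · intro hc
    have hcoeff : ∀ v ∉ X, (c ᵥ* M) v = 0 ∧ c v = 0 := fun v hv =>
      (hab v).eq_zero_of_pair (hc v hv)
    exact ⟨fun v hv => (hcoeff v hv).2, fun v hv => (hcoeff v hv).1⟩
  · rintro ⟨hc, hcM⟩ v hv
    have hcMv : (c ᵥ* M) v = 0 := hcM v hv
    rw [chainOfCoeffs_apply, hcMv, hc v hv, zero_smul, zero_smul, add_zero]

lemma injective_res_chainOfCoeffs_extendByZero (M : Matrix E E R) {a b : E → K}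
    (hab : ∀ v, LinearIndependent R ![a v, b v]) (X : Finset E) :
    Function.Injective (res R K X ∘ₗ chainOfCoeffs M a b ∘ₗ extendByZero R X) := by
  intro c d hcd
  ext i
  have hi : extendByZero R X c i = extendByZero R X d i :=
    (LinearIndependent.pair_iffₛ.1 (hab i) _ _ _ _ (congrFun hcd i)).2
  rwa [extendByZero_apply_coe, extendByZero_apply_coe] at hi

end Chains

lemma comap_extendByZero_comap_vecMulLinear_vanish (M : Matrix V V F) (X : Finset V) :
    ((vanish F X).comap M.vecMulLinear).comap (extendByZero F X) =
      LinearMap.ker (psub M X Xᶜ).vecMulLinear := by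
  ext c
  have hvecMul (v : V) : (extendByZero F X c ᵥ* M) v =
      (c ᵥ* M.submatrix (Subtype.val : X → V) id) v :=
    congrFun (extend_vecMul Subtype.val_injective c M) v
  constructor
  · exact fun hc => funext fun j => (hvecMul j).symm.trans (hc j (Finset.mem_compl.1 j.2))
  · exact fun hc v hv => (hvecMul v).trans (congrFun hc ⟨v, Finset.mem_compl.2 hv⟩)

section Representation

variable {K : Type*} [AddCommGroup K] [Module F K]

lemma timesTo_chainGroup_eq_map_ker (M : Matrix V V F) {a b : V → K}
    (hab : ∀ v, LinearIndependent F ![a v, b v]) (X : Finset V) :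
    timesTo (chainGroup M a b) X =
      (LinearMap.ker (psub M X Xᶜ).vecMulLinear).map
        (res F K X ∘ₗ chainOfCoeffs M a b ∘ₗ extendByZero F X) := by
  rw [timesTo, ← range_chainOfCoeffs, ← Submodule.map_comap_eq, comap_chainOfCoeffs_vanish M hab,
    ← range_extendByZero, ← Submodule.map_comap_eq, range_extendByZero,
    comap_extendByZero_comap_vecMulLinear_vanish, Submodule.map_comp, Submodule.map_comp]

theorem rank_offdiag_eq_general (M : Matrix V V F) {a b : V → K}
    (hab : ∀ v, LinearIndependent F ![a v, b v]) (X : Finset V) :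
    (psub M X Xᶜ).rank + Module.finrank F (timesTo (chainGroup M a b) X) = X.card := by
  rw [timesTo_chainGroup_eq_map_ker M hab,
    ← (Submodule.equivMapOfInjective _
      (injective_res_chainOfCoeffs_extendByZero M hab X) _).finrank_eq,
    rank_add_finrank_ker_vecMulLinear, Fintype.card_coe]

end Representation

/-- Let `M` be a skew-symmetric or symmetric matrix representing (via a matrix
representation `(M,a,b)`) the Lagrangian chain-group `N` spanned by the chains
`f_i`.  Then for every `X ⊆ V`, `rank M[X, V∖X] = |X| − dim(N×X)`. -/
theorem rank_offdiag_eq (M : Matrix V V F) (β : F × F → F × F → F)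
    (a b : V → F × F)
    (hM : (Mᵀ = -M ∧ (∀ i, M i i = 0) ∧ β = (bplus : F × F → F × F → F)) ∨
          (Mᵀ = M ∧ β = (bminus : F × F → F × F → F)))
    (hsupp : ∀ x, β (a x) (a x) = 0 ∧ β (b x) (b x) = 0 ∧ β (a x) (b x) = 1)
    (X : Finset V) :
    (psub M X Xᶜ).rank
        + Module.finrank F
          (timesTo
            (Submodule.span F
              (Set.range fun i : V => fun j : V =>
                if j = i then M i i • a i + b i else M i j • a j)) X)
      = X.card := by
  have hab (v : V) : LinearIndependent F ![a v, b v] :=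
    linearIndependent_pair_of_bplus_or_bminus (hM.imp (·.2.2) (·.2)) (hsupp v).1
      ((hsupp v).2.2 ▸ one_ne_zero)
  exact rank_offdiag_eq_general M hab X
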